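/- arXiv:2412.11842 — 6 statements merged into one kernel-verified Lean document; each statement's English description precedes it below -/
import Mathlib

section
/- Theorem 1.3(i): Let d ≥ 1 and let ε be a real number with 0 ≤ ε ≤ γ_d. Then there exists no probability measure ν on ℤ^d satisfying the balance equation with parameter ε, i.e. there is no ν : ℤ^d → [0,∞) with Σ_{x∈ℤ^d} ν_x = 1 such that (1 + ε ν_0) ν_x = (1/(2d)) Σ_{i=1}^d (ν_{x+e_i} + ν_{x−e_i}) for all x ∈ ℤ^d, x ≠ 0. -/
open Finset

namespace CBRW

/-- The `i`-th canonical basis vector of `ℤ^d`. -/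
def e (d : ℕ) (i : Fin d) : Fin d → ℤ := Pi.single i 1

/-- The step of the simple random walk corresponding to the direction `(i, b)`:
`+e_i` if `b = true`, `-e_i` if `b = false`. -/
def dir (d : ℕ) (s : Fin d × Bool) : Fin d → ℤ := if s.2 then e d s.1 else -(e d s.1)

/-- The position at time `j` of the simple random walk started at `x` and driven by the
word of increments `w` (of length `k`); only the first `j` letters of `w` are used. -/
def posAt (d : ℕ) {k : ℕ} (x : Fin d → ℤ) (w : Fin k → Fin d × Bool) (j : ℕ) :
    Fin d → ℤ :=
  x + ∑ i : Fin k, if (i : ℕ) < j then dir d (w i) else 0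

open Classical in
/-- `ℙ_x(τ_y = k)`: the probability that the simple random walk on `ℤ^d` started at `x`
first visits `y` at time `k` (meaningful for `k ≥ 1`). -/
noncomputable def firstHitProb (d : ℕ) (x y : Fin d → ℤ) (k : ℕ) : ℝ :=
  ((Finset.univ.filter (fun w : Fin k → Fin d × Bool =>
      (∀ j, 1 ≤ j → j < k → posAt d x w j ≠ y) ∧ posAt d x w k = y)).card : ℝ) /
    (2 * (d : ℝ)) ^ k

open Classical in
/-- `ℙ_x(τ_y ≥ k + 1)`: the probability that the simple random walk on `ℤ^d` started at `x`
avoids `y` at all times `1, …, k`. -/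
noncomputable def avoidProb (d : ℕ) (x y : Fin d → ℤ) (k : ℕ) : ℝ :=
  ((Finset.univ.filter (fun w : Fin k → Fin d × Bool =>
      ∀ j, 1 ≤ j → j ≤ k → posAt d x w j ≠ y)).card : ℝ) / (2 * (d : ℝ)) ^ k

/-- `γ_d = ℙ_0(τ_0 = ∞)`: the probability that the simple random walk started at `0`
never returns to `0`. -/
noncomputable def gamma (d : ℕ) : ℝ := 1 - ∑' k : ℕ, firstHitProb d 0 0 (k + 1)

/-- `E_x[𝟙_{τ_y < ∞} (1 + u)^{-τ_y}]` for the simple random walk started at `x`. -/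
noncomputable def hitGen (d : ℕ) (x y : Fin d → ℤ) (u : ℝ) : ℝ :=
  ∑' k : ℕ, firstHitProb d x y (k + 1) * ((1 + u) ^ (k + 1))⁻¹

/-- `ν` satisfies the balance equation with parameter `ε`:
`(1 + ε ν 0) ν x = (1/(2d)) ∑ i (ν (x + e i) + ν (x - e i))` for all `x ≠ 0`. -/
def BalanceEq (d : ℕ) (ε : ℝ) (ν : (Fin d → ℤ) → ℝ) : Prop :=
  ∀ x : Fin d → ℤ, x ≠ 0 →
    (1 + ε * ν 0) * ν x =
      (1 / (2 * (d : ℝ))) * ∑ i : Fin d, (ν (x + e d i) + ν (x - e d i))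

/-- `ν` is a probability measure on `ℤ^d`, identified with a nonnegative function
summing to `1`. -/
def IsProbMeasure (d : ℕ) (ν : (Fin d → ℤ) → ℝ) : Prop :=
  (∀ x, 0 ≤ ν x) ∧ HasSum ν 1

end CBRW

namespace CBRW

/-- Averaging operator. -/
noncomputable def avg (d : ℕ) (f : (Fin d → ℤ) → ℝ) (x : Fin d → ℤ) : ℝ :=
  (1 / (2 * (d : ℝ))) * ∑ s : Fin d × Bool, f (x + dir d s)

lemma avg_eq (d : ℕ) (f : (Fin d → ℤ) → ℝ) (x : Fin d → ℤ) :
    avg d f x = (1 / (2 * (d : ℝ))) * ∑ i : Fin d, (f (x + e d i) + f (x - e d i)) := by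
  unfold avg
  rw [Fintype.sum_prod_type]
  simp [dir, sub_eq_add_neg]

lemma avg_mono {d : ℕ} {f g : (Fin d → ℤ) → ℝ} (h : ∀ x, f x ≤ g x) (x : Fin d → ℤ) :
    avg d f x ≤ avg d g x := by
  unfold avg
  have := Finset.sum_le_sum (s := Finset.univ) (fun (s : Fin d × Bool) _ => h (x + dir d s))
  gcongr

lemma avg_const {d : ℕ} (hd : 1 ≤ d) (c : ℝ) (x : Fin d → ℤ) :
    avg d (fun _ => c) x = c := by
  unfold avg
  have : (d : ℝ) ≠ 0 := by positivity
  simp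
  field_simp

lemma avg_add {d : ℕ} (f g : (Fin d → ℤ) → ℝ) (x : Fin d → ℤ) :
    avg d (fun y => f y + g y) x = avg d f x + avg d g x := by
  unfold avg
  rw [Finset.sum_add_distrib, mul_add]

lemma avg_smul {d : ℕ} (c : ℝ) (f : (Fin d → ℤ) → ℝ) (x : Fin d → ℤ) :
    avg d (fun y => c * f y) x = c * avg d f x := by
  unfold avg
  rw [← Finset.mul_sum]; ring

lemma avg_sum {d : ℕ} (n : ℕ) (f : ℕ → (Fin d → ℤ) → ℝ) (x : Fin d → ℤ) :
    avg d (fun y => ∑ k ∈ range n, f k y) x = ∑ k ∈ range n, avg d (f k) x := by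
  unfold avg
  rw [Finset.sum_comm, Finset.mul_sum]

lemma posAt_cons (d k : ℕ) (x : Fin d → ℤ) (s : Fin d × Bool) (w : Fin k → Fin d × Bool) (j : ℕ) :
    posAt d x (Fin.cons s w : Fin (k + 1) → Fin d × Bool) (j + 1) = posAt d (x + dir d s) w j := by
  unfold posAt
  rw [Fin.sum_univ_succ]
  simp [add_assoc]

lemma posAt_zero (d k : ℕ) (x : Fin d → ℤ) (w : Fin k → Fin d × Bool) :
    posAt d x w 0 = x := by
  simp [posAt]

lemma ite_iff {p q : Prop} {ip : Decidable p} {iq : Decidable q} (h : p ↔ q) :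
    (@ite ℝ p ip 1 0) = @ite ℝ q iq 1 0 := by
  by_cases hp : p
  · rw [if_pos hp, if_pos (h.1 hp)]
  · rw [if_neg hp, if_neg (fun hq => hp (h.2 hq))]

open Classical in
lemma firstHit_eq (d : ℕ) (x y : Fin d → ℤ) (k : ℕ) :
    firstHitProb d x y k = (∑ w : Fin k → Fin d × Bool,
      if ((∀ j, 1 ≤ j → j < k → posAt d x w j ≠ y) ∧ posAt d x w k = y) then (1 : ℝ) else 0) /
        (2 * (d : ℝ)) ^ k := by
  unfold firstHitProb
  rw [Finset.card_filter, Nat.cast_sum]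
  congr 1
  refine Finset.sum_congr rfl fun w _ => ?_
  rw [Nat.cast_ite, Nat.cast_one, Nat.cast_zero]

open Classical in
lemma firstHit_one (d : ℕ) (x : Fin d → ℤ) :
    firstHitProb d x 0 1 = avg d (fun y => if y = 0 then 1 else 0) x := by
  rw [firstHit_eq, ← (Fin.consEquiv (fun _ : Fin 1 => Fin d × Bool)).sum_comp,
    Fintype.sum_prod_type]
  unfold avg
  rw [pow_one, div_eq_inv_mul, one_div]
  congr 1
  refine Finset.sum_congr rfl fun s _ => ?_
  have h : ∀ w : Fin 0 → Fin d × Bool,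
    posAt d x (Fin.cons s w : Fin 1 → Fin d × Bool) 1 = x + dir d s := fun w => by
      rw [posAt_cons d 0 x s w 0, posAt_zero]
  have h' : ∀ w : Fin 0 → Fin d × Bool,
      posAt d x ((Fin.consEquiv (fun _ : Fin 1 => Fin d × Bool)) (s, w)) 1 = x + dir d s := h
  rw [Fintype.sum_unique, h']
  refine ite_iff ⟨fun h => h.2, fun h => ⟨fun j h1 h2 => absurd h1 (by omega), h⟩⟩

open Classical in
lemma firstHit_succ (d : ℕ) (x : Fin d → ℤ) (k : ℕ) :
    firstHitProb d x 0 (k + 2) =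
      avg d (fun y => if y = 0 then 0 else firstHitProb d y 0 (k + 1)) x := by
  rw [firstHit_eq, ← (Fin.consEquiv (fun _ : Fin (k + 2) => Fin d × Bool)).sum_comp,
    Fintype.sum_prod_type]
  unfold avg
  rw [pow_succ, ← div_div, div_eq_inv_mul, one_div, Finset.sum_div]
  congr 1
  refine Finset.sum_congr rfl fun s _ => ?_
  beta_reduce
  rw [firstHit_eq]
  split_ifs with h0
  · rw [Finset.sum_eq_zero, zero_div]
    intro w _
    rw [if_neg]
    rintro ⟨h1, -⟩
    apply h1 1 le_rfl (by omega)
    exact (posAt_cons d (k + 1) x s w 0).trans ((posAt_zero _ _ _ _).trans h0)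
  · congr 1
    refine Finset.sum_congr rfl fun w _ => ?_
    have key : ∀ j, posAt d x ((Fin.consEquiv (fun _ : Fin (k + 2) => Fin d × Bool)) (s, w)) (j + 1)
        = posAt d (x + dir d s) w j := fun j => posAt_cons d (k + 1) x s w j
    refine ite_iff ?_
    refine and_congr ⟨fun h j hj hjk => ?_, fun h j hj hjk => ?_⟩ ?_
    · rw [← key]; exact h (j + 1) (by omega) (by omega)
    · obtain ⟨i, rfl⟩ : ∃ i, j = i + 1 := ⟨j - 1, by omega⟩
      rw [key]
      rcases Nat.eq_zero_or_pos i with rfl | hi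
      · rw [posAt_zero]; exact h0
      · exact h i hi (by omega)
    · rw [key]

lemma firstHit_nonneg (d : ℕ) (x y : Fin d → ℤ) (k : ℕ) : 0 ≤ firstHitProb d x y k := by
  unfold firstHitProb; positivity

open Classical in
lemma partial_succ (d : ℕ) (x : Fin d → ℤ) (n : ℕ) :
    ∑ k ∈ range (n + 1), firstHitProb d x 0 (k + 1) =
      avg d (fun y => if y = 0 then 1 else ∑ k ∈ range n, firstHitProb d y 0 (k + 1)) x := by
  rw [Finset.sum_range_succ', firstHit_one]
  simp_rw [firstHit_succ]
  rw [← avg_sum, ← avg_add]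
  congr 1
  funext y
  split_ifs <;> simp

lemma partial_le_one {d : ℕ} (hd : 1 ≤ d) (n : ℕ) (x : Fin d → ℤ) :
    ∑ k ∈ range n, firstHitProb d x 0 (k + 1) ≤ 1 := by
  classical
  induction n generalizing x with
  | zero => simp
  | succ n ih =>
    rw [partial_succ]
    refine (avg_mono (g := fun _ => 1) (fun y => ?_) x).trans (avg_const hd 1 x).le
    split_ifs
    · exact le_rfl
    · exact ih y

lemma partial_le_gamma {d : ℕ} (hd : 1 ≤ d) (n : ℕ) :
    ∑ k ∈ range n, firstHitProb d 0 0 (k + 1) ≤ 1 - gamma d := by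
  have hs : Summable (fun k => firstHitProb d 0 0 (k + 1)) :=
    summable_of_sum_range_le (fun k => firstHit_nonneg _ _ _ _) (fun n => partial_le_one hd n 0)
  have := hs.sum_le_tsum (range n) (fun k _ => firstHit_nonneg _ _ _ _)
  unfold gamma
  linarith

lemma avg_bound {d : ℕ} (hd : 1 ≤ d) {ν : (Fin d → ℤ) → ℝ} (u : ℝ) (hu : 0 ≤ u)
    (h0 : ∀ x, 0 ≤ ν x) (h1 : ∀ x, ν x ≤ 1)
    (hb : ∀ x, x ≠ 0 → (1 + u) * ν x = avg d ν x) (n : ℕ) (x : Fin d → ℤ) :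
    avg d ν x ≤ ν 0 * ∑ k ∈ range n, firstHitProb d x 0 (k + 1) + ((1 + u)⁻¹) ^ n := by
  classical
  induction n generalizing x with
  | zero => simpa using (avg_mono h1 x).trans (avg_const hd 1 x).le
  | succ n ih =>
    rw [partial_succ, ← avg_smul, ← avg_const hd ((1 + u)⁻¹ ^ (n + 1)) x, ← avg_add]
    refine avg_mono (fun y => ?_) x
    have hp : 0 < 1 + u := by linarith
    have hpi : 0 < (1 + u)⁻¹ := by positivity
    split_ifs with hy
    · subst hy
      have : 0 ≤ (1 + u)⁻¹ ^ (n + 1) := by positivity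
      linarith
    · have e1 : ν y = (1 + u)⁻¹ * avg d ν y := by rw [← hb y hy]; field_simp
      have hle : (1 + u)⁻¹ ≤ 1 := inv_le_one_of_one_le₀ (by linarith)
      have hS : 0 ≤ ν 0 * ∑ k ∈ range n, firstHitProb d y 0 (k + 1) :=
        mul_nonneg (h0 0) (Finset.sum_nonneg fun k _ => firstHit_nonneg _ _ _ _)
      rw [e1]
      calc _ ≤ (1 + u)⁻¹ * (ν 0 * ∑ k ∈ range n, firstHitProb d y 0 (k + 1) + ((1 + u)⁻¹) ^ n) :=
            mul_le_mul_of_nonneg_left (ih y) hpi.le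
        _ = (1 + u)⁻¹ * (ν 0 * ∑ k ∈ range n, firstHitProb d y 0 (k + 1)) + ((1 + u)⁻¹) ^ (n + 1) := by
            ring
        _ ≤ _ := by
            have := mul_le_mul_of_nonneg_right hle hS
            linarith

lemma hasSum_avg {d : ℕ} (hd : 1 ≤ d) {ν : (Fin d → ℤ) → ℝ} (h : HasSum ν 1) :
    HasSum (avg d ν) 1 := by
  have h1 : ∀ s ∈ (Finset.univ : Finset (Fin d × Bool)),
      HasSum (fun x => ν (x + dir d s)) 1 := fun s _ =>
    (Equiv.addRight (dir d s)).hasSum_iff.mpr h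
  have h2 := (hasSum_sum h1).mul_left (1 / (2 * (d : ℝ)))
  have : (d : ℝ) ≠ 0 := by positivity
  have h3 : (1 / (2 * (d : ℝ))) * ∑ _s : Fin d × Bool, (1 : ℝ) = 1 := by
    simp
    field_simp
  rw [h3] at h2
  exact h2

lemma no_harmonic {d : ℕ} (hd : 1 ≤ d) {ν : (Fin d → ℤ) → ℝ}
    (h0 : ∀ x, 0 ≤ ν x) (h : HasSum ν 1) (hh : ∀ x, avg d ν x = ν x) : False := by
  have hc := h.summable.tendsto_cofinite_zero
  obtain ⟨x, hx⟩ : ∃ x, 0 < ν x := by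
    by_contra! hcon
    have : ν = fun _ => 0 := funext fun x => le_antisymm (hcon x) (h0 x)
    rw [this] at h
    exact zero_ne_one (hasSum_zero.unique h)
  have hfin : {y | ν x ≤ ν y}.Finite := by
    have := hc.eventually (gt_mem_nhds hx)
    rw [Filter.eventually_cofinite] at this
    simpa using this
  obtain ⟨m, hm, hmax⟩ := hfin.exists_maximalFor ν _ ⟨x, le_refl (ν x)⟩
  have hm' : ν x ≤ ν m := hm
  have hM : ∀ y, ν y ≤ ν m := fun y => by
    by_contra! hlt
    have := hmax (j := y) (by show ν x ≤ ν y; linarith) hlt.le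
    linarith
  let i0 : Fin d := ⟨0, hd⟩
  have step : ∀ y, ν y = ν m → ν (y + e d i0) = ν m := by
    intro y hy
    refine le_antisymm (hM _) ?_
    by_contra! hlt
    have hdp : (0 : ℝ) < d := by positivity
    have : avg d ν y < avg d (fun _ => ν m) y := by
      unfold avg
      refine mul_lt_mul_of_pos_left ?_ (by positivity)
      refine Finset.sum_lt_sum (fun s _ => hM _) ⟨(i0, true), Finset.mem_univ _, ?_⟩
      simpa [dir] using hlt
    rw [avg_const hd, hh, hy] at this
    exact lt_irrefl _ this
  have all : ∀ n : ℕ, ν (m + n • e d i0) = ν m := by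
    intro n
    induction n with
    | zero => simp
    | succ n ih => rw [succ_nsmul, ← add_assoc]; exact step _ ih
  have inj : Function.Injective (fun n : ℕ => m + n • e d i0) := by
    intro a b hab
    have := congrFun hab i0
    simpa [e] using this
  have ht := hc.comp inj.tendsto_cofinite
  have : (ν ∘ fun n : ℕ => m + n • e d i0) = fun _ => ν m := funext all
  rw [this] at ht
  have := tendsto_nhds_unique ht tendsto_const_nhds
  linarith

end CBRW

open CBRW in
/-- Theorem 1.3(i): if `0 ≤ ε ≤ γ_d`, there is no probability measure on `ℤ^d`
satisfying the balance equation with parameter `ε`. -/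
theorem no_balance_probability_measure_of_le_gamma
    (d : ℕ) (hd : 1 ≤ d) (ε : ℝ) (hε0 : 0 ≤ ε) (hεγ : ε ≤ gamma d) :
    ¬ ∃ ν : (Fin d → ℤ) → ℝ, IsProbMeasure d ν ∧ BalanceEq d ε ν := by
  rintro ⟨ν, ⟨h0, hs⟩, hB⟩
  have hb : ∀ x, x ≠ 0 → (1 + ε * ν 0) * ν x = avg d ν x := fun x hx => by
    rw [avg_eq]; exact hB x hx
  have h1 : ∀ x, ν x ≤ 1 := fun x => le_hasSum hs x fun y _ => h0 y
  have hz : (1 + ε * ν 0) * ν 0 - avg d ν 0 = ε * ν 0 := by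
    have a := (hs.mul_left (1 + ε * ν 0)).sub (hasSum_avg hd hs)
    have b := hasSum_single (f := fun x => (1 + ε * ν 0) * ν x - avg d ν x) 0
      (fun x hx => by rw [hb x hx, sub_self])
    have := b.unique a
    linarith
  have hu : 0 ≤ ε * ν 0 := mul_nonneg hε0 (h0 0)
  rcases hu.eq_or_lt with hu0 | hup
  · refine no_harmonic hd h0 hs fun x => ?_
    rw [← hu0] at hz hb
    by_cases hx : x = 0
    · subst hx; linarith
    · linarith [hb x hx]
  · have hlim : avg d ν 0 ≤ ν 0 * (1 - gamma d) := by
      have ht : Filter.Tendsto (fun n : ℕ => ν 0 * (1 - gamma d) + ((1 + ε * ν 0)⁻¹) ^ n)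
          Filter.atTop (nhds (ν 0 * (1 - gamma d) + 0)) := by
        refine tendsto_const_nhds.add (tendsto_pow_atTop_nhds_zero_of_lt_one (by positivity) ?_)
        exact inv_lt_one_of_one_lt₀ (by linarith)
      rw [add_zero] at ht
      refine ge_of_tendsto' ht fun n => ?_
      have := avg_bound hd _ hu h0 h1 hb n 0
      have := mul_le_mul_of_nonneg_left (partial_le_gamma hd n) (h0 0)
      linarith
    have hν : 0 < ν 0 := by
      rcases (h0 0).eq_or_lt with h | h
      · rw [← h] at hup; simp at hup
      · exact h
    have := mul_le_mul_of_nonneg_left hεγ (h0 0)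
    have := mul_pos hup hν
    nlinarith
end

section
/- Theorem 1.3(ii): Let d ≥ 1 and let ε > γ_d. Then there exists a unique probability measure ν on ℤ^d satisfying the balance equation with parameter ε, i.e. there is exactly one ν : ℤ^d → [0,∞) with Σ_{x∈ℤ^d} ν_x = 1 such that (1 + ε ν_0) ν_x = (1/(2d)) Σ_{i=1}^d (ν_{x+e_i} + ν_{x−e_i}) for all x ∈ ℤ^d, x ≠ 0. -/
open Finset

namespace CBRW

/-- averaging operator -/
noncomputable def PP (d : ℕ) (f : (Fin d → ℤ) → ℝ) (x : Fin d → ℤ) : ℝ :=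
  (1 / (2 * (d : ℝ))) * ∑ i : Fin d, (f (x + e d i) + f (x - e d i))

open Classical in
noncomputable def qq (d : ℕ) (k : ℕ) (y : Fin d → ℤ) : ℝ :=
  if y = 0 then (if k = 0 then 1 else 0) else firstHitProb d y 0 k

lemma posAt_cons_succ (d k : ℕ) (x : Fin d → ℤ) (s : Fin d × Bool)
    (w : Fin k → Fin d × Bool) (j : ℕ) :
    posAt d x (Fin.cons s w : Fin (k+1) → Fin d × Bool) (j+1) = posAt d (x + dir d s) w j := by
  simp [posAt, Fin.sum_univ_succ, add_assoc]

lemma qq_nonneg (d k : ℕ) (y : Fin d → ℤ) : 0 ≤ qq d k y := by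
  unfold qq
  split_ifs
  · norm_num
  · norm_num
  · exact firstHit_nonneg _ _ _ _

open Classical in
lemma qq_eq (d k : ℕ) (y : Fin d → ℤ) :
    qq d k y = ((Finset.univ.filter (fun w : Fin k → Fin d × Bool =>
      (∀ j, j < k → posAt d y w j ≠ 0) ∧ posAt d y w k = 0)).card : ℝ) /
    (2 * (d : ℝ)) ^ k := by
  unfold qq
  split_ifs with h h'
  · subst h'
    simp [posAt_zero, h]
  · rw [Finset.filter_false_of_mem]
    · simp
    · intro w _ hw
      exact hw.1 0 (Nat.pos_of_ne_zero h') (by rw [posAt_zero, h])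
  · unfold firstHitProb
    congr 2
    refine congrArg Finset.card ?_
    ext w
    simp only [Finset.mem_filter, Finset.mem_univ, true_and]
    refine and_congr ⟨fun H j hj => ?_, fun H j _ hj => H j hj⟩ Iff.rfl
    rcases Nat.eq_zero_or_pos j with rfl | hp
    · rwa [posAt_zero]
    · exact H j hp hj

lemma sum_dir (d : ℕ) (f : (Fin d → ℤ) → ℝ) (x : Fin d → ℤ) :
    ∑ s : Fin d × Bool, f (x + dir d s) = ∑ i : Fin d, (f (x + e d i) + f (x - e d i)) := by
  rw [Fintype.sum_prod_type]
  simp [dir, sub_eq_add_neg]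

open Classical in
lemma firstHit_succ_s1 (d k : ℕ) (x : Fin d → ℤ) :
    firstHitProb d x 0 (k+1) = PP d (qq d k) x := by
  have key : (Finset.univ.filter (fun w : Fin (k+1) → Fin d × Bool =>
      (∀ j, 1 ≤ j → j < k+1 → posAt d x w j ≠ 0) ∧ posAt d x w (k+1) = 0)).card
      = ∑ s : Fin d × Bool, (Finset.univ.filter (fun w : Fin k → Fin d × Bool =>
      (∀ j, j < k → posAt d (x + dir d s) w j ≠ 0) ∧ posAt d (x + dir d s) w k = 0)).card := by
    simp only [Finset.card_filter]
    rw [← (Fin.consEquiv (fun _ : Fin (k+1) => Fin d × Bool)).sum_comp, Fintype.sum_prod_type]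
    refine Finset.sum_congr rfl fun s _ => Finset.sum_congr rfl fun w _ => ?_
    change (if (∀ j, 1 ≤ j → j < k + 1 →
      posAt d x (Fin.cons s w : Fin (k+1) → Fin d × Bool) j ≠ 0) ∧
      posAt d x (Fin.cons s w : Fin (k+1) → Fin d × Bool) (k+1) = 0 then 1 else 0) = _
    congr 1
    rw [posAt_cons_succ, eq_iff_iff]
    refine and_congr ⟨fun H j hj => ?_, fun H j h1 hj => ?_⟩ Iff.rfl
    · have := H (j+1) (by omega) (by omega)
      rwa [posAt_cons_succ] at this
    · obtain ⟨i, rfl⟩ : ∃ i, j = i + 1 := ⟨j - 1, by omega⟩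
      rw [posAt_cons_succ]
      exact H i (by omega)
  unfold firstHitProb PP
  rw [key, ← sum_dir d (qq d k) x]
  simp only [qq_eq]
  push_cast
  rw [← Finset.sum_div, pow_succ]
  field_simp

lemma PP_nonneg (d : ℕ) (f : (Fin d → ℤ) → ℝ) (hf : ∀ x, 0 ≤ f x) (x : Fin d → ℤ) :
    0 ≤ PP d f x := by
  unfold PP
  exact mul_nonneg (by positivity)
    (Finset.sum_nonneg fun i _ => add_nonneg (hf _) (hf _))

lemma PP_hasSum (d : ℕ) (hd : 1 ≤ d) (f : (Fin d → ℤ) → ℝ) (S : ℝ) (hf : HasSum f S) :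
    HasSum (PP d f) S := by
  have h1 : ∀ i : Fin d, HasSum (fun x => f (x + e d i) + f (x - e d i)) (S + S) := by
    intro i
    exact ((Equiv.addRight (e d i)).hasSum_iff.mpr hf).add
      ((Equiv.subRight (e d i)).hasSum_iff.mpr hf)
  have h2 := (hasSum_sum (s := Finset.univ) fun i _ => h1 i).mul_left (1 / (2 * (d : ℝ)))
  have hd' : (0:ℝ) < d := by exact_mod_cast hd
  have hS : 1 / (2 * (d : ℝ)) * ∑ _i : Fin d, (S + S) = S := by
    simp
    field_simp
    ring
  rw [hS] at h2
  exact h2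

lemma qq_succ (d k : ℕ) (x : Fin d → ℤ) :
    qq d (k+1) x = PP d (qq d k) x - (if x = 0 then PP d (qq d k) 0 else 0) := by
  by_cases h : x = 0
  · simp [qq, h]
  · simp [qq, h, firstHit_succ_s1]

/-- return probabilities -/
noncomputable def aa (d k : ℕ) : ℝ := PP d (qq d k) 0

lemma aa_nonneg (d k : ℕ) : 0 ≤ aa d k := PP_nonneg _ _ (qq_nonneg d k) _

lemma qq_hasSum (d : ℕ) (hd : 1 ≤ d) (k : ℕ) :
    HasSum (qq d k) (1 - ∑ j ∈ Finset.range k, aa d j) := by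
  induction k with
  | zero =>
    have : qq d 0 = fun x => if x = 0 then (1:ℝ) else 0 := by
      funext x
      rw [qq_eq]
      by_cases h : x = 0 <;> simp [posAt_zero, h]
    rw [this]
    simpa using hasSum_ite_eq (0 : Fin d → ℤ) (1:ℝ)
  | succ k ih =>
    have h1 := (PP_hasSum d hd _ _ ih).sub
      (hasSum_ite_eq (0 : Fin d → ℤ) (aa d k))
    rw [Finset.sum_range_succ, ← sub_sub]
    have hfun : qq d (k+1) = fun x => PP d (qq d k) x - (if x = 0 then aa d k else 0) := by
      funext x
      rw [qq_succ]
      rfl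
    rw [hfun]
    exact h1

lemma aa_partial (d : ℕ) (hd : 1 ≤ d) (k : ℕ) : ∑ j ∈ Finset.range k, aa d j ≤ 1 := by
  have := (qq_hasSum d hd k).nonneg (qq_nonneg d k)
  linarith

lemma aa_summable (d : ℕ) (hd : 1 ≤ d) : Summable (aa d) :=
  summable_of_sum_range_le (aa_nonneg d) (aa_partial d hd)

lemma aa_tsum_le (d : ℕ) (hd : 1 ≤ d) : ∑' k, aa d k ≤ 1 :=
  Real.tsum_le_of_sum_range_le (aa_nonneg d) (aa_partial d hd)

lemma gamma_eq (d : ℕ) : gamma d = 1 - ∑' k, aa d k := by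
  unfold gamma aa
  simp only [firstHit_succ_s1]

/-- discounted return generating function -/
noncomputable def AA (d : ℕ) (r : ℝ) : ℝ := ∑' k, aa d k * r ^ k

lemma aar_summable (d : ℕ) (hd : 1 ≤ d) (r : ℝ) (h0 : 0 ≤ r) (h1 : r ≤ 1) :
    Summable fun k => aa d k * r ^ k :=
  Summable.of_nonneg_of_le (fun k => mul_nonneg (aa_nonneg d k) (pow_nonneg h0 k))
    (fun k => mul_le_of_le_one_right (aa_nonneg d k) (pow_le_one₀ h0 h1)) (aa_summable d hd)

lemma AA_mono (d : ℕ) (hd : 1 ≤ d) (r s : ℝ) (h0 : 0 ≤ r) (hrs : r ≤ s) (h1 : s ≤ 1) :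
    AA d r ≤ AA d s :=
  Summable.tsum_le_tsum
    (fun k => mul_le_mul_of_nonneg_left (pow_le_pow_left₀ h0 hrs k) (aa_nonneg d k))
    (aar_summable d hd r h0 (hrs.trans h1)) (aar_summable d hd s (h0.trans hrs) h1)

lemma AA_one (d : ℕ) : AA d 1 = ∑' k, aa d k := by simp [AA]

lemma AA_cont (d : ℕ) (hd : 1 ≤ d) : ContinuousOn (AA d) (Set.Icc 0 1) := by
  unfold AA
  refine continuousOn_tsum (fun k => by fun_prop) (aa_summable d hd) ?_
  intro k r hr
  rw [Real.norm_of_nonneg (mul_nonneg (aa_nonneg d k) (pow_nonneg hr.1 k))]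
  exact mul_le_of_le_one_right (aa_nonneg d k) (pow_le_one₀ hr.1 hr.2)

/-- hitting generating function -/
noncomputable def hh (d : ℕ) (r : ℝ) (x : Fin d → ℤ) : ℝ := ∑' k, qq d k x * r ^ k

lemma qqr_summable (d : ℕ) (hd : 1 ≤ d) (r : ℝ) (h0 : 0 ≤ r) (h1 : r < 1) :
    Summable fun p : ℕ × (Fin d → ℤ) => qq d p.1 p.2 * r ^ p.1 := by
  rw [summable_prod_of_nonneg (fun p => mul_nonneg (qq_nonneg _ _ _) (pow_nonneg h0 _))]
  have hs := fun k => (qq_hasSum d hd k).mul_right (r ^ k)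
  refine ⟨fun k => (hs k).summable, ?_⟩
  simp only [fun k => (hs k).tsum_eq]
  refine Summable.of_nonneg_of_le (fun k => ?_) (fun k => ?_)
    (summable_geometric_of_lt_one h0 h1)
  · have := aa_partial d hd k
    exact mul_nonneg (by linarith) (pow_nonneg h0 k)
  · have : 0 ≤ ∑ j ∈ Finset.range k, aa d j := Finset.sum_nonneg fun j _ => aa_nonneg d j
    exact mul_le_of_le_one_left (pow_nonneg h0 k) (by linarith)

lemma qx_summable (d : ℕ) (hd : 1 ≤ d) (r : ℝ) (h0 : 0 ≤ r) (h1 : r < 1) (x : Fin d → ℤ) :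
    Summable fun k => qq d k x * r ^ k :=
  (qqr_summable d hd r h0 h1).prod_symm.prod_factor x

lemma hh_summable (d : ℕ) (hd : 1 ≤ d) (r : ℝ) (h0 : 0 ≤ r) (h1 : r < 1) :
    Summable (hh d r) := (qqr_summable d hd r h0 h1).prod_symm.prod

lemma hh_nonneg (d : ℕ) (r : ℝ) (h0 : 0 ≤ r) (x : Fin d → ℤ) : 0 ≤ hh d r x :=
  tsum_nonneg fun k => mul_nonneg (qq_nonneg _ _ _) (pow_nonneg h0 _)

lemma PP_hh (d : ℕ) (hd : 1 ≤ d) (r : ℝ) (h0 : 0 ≤ r) (h1 : r < 1) (x : Fin d → ℤ) :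
    HasSum (fun k => PP d (qq d k) x * r ^ k) (PP d (hh d r) x) := by
  have hs := fun y => (qx_summable d hd r h0 h1 y).hasSum
  have h2 := (hasSum_sum (s := Finset.univ) fun (i : Fin d) _ =>
    (hs (x + e d i)).add (hs (x - e d i))).mul_left (1 / (2 * (d : ℝ)))
  have hfun : (fun k => PP d (qq d k) x * r ^ k) = fun k => 1 / (2 * (d : ℝ)) *
      ∑ i : Fin d, (qq d k (x + e d i) * r ^ k + qq d k (x - e d i) * r ^ k) := by
    funext k
    unfold PP
    simp only [← add_mul, ← Finset.sum_mul]
    ring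
  rw [hfun]
  exact h2

lemma hh_zero (d : ℕ) (r : ℝ) : hh d r 0 = 1 := by
  unfold hh
  rw [tsum_eq_single 0]
  · simp [qq]
  · intro k hk
    simp [qq, hk]

lemma PP_hh_zero (d : ℕ) (hd : 1 ≤ d) (r : ℝ) (h0 : 0 ≤ r) (h1 : r < 1) :
    PP d (hh d r) 0 = AA d r := (PP_hh d hd r h0 h1 0).tsum_eq.symm

lemma hh_eq (d : ℕ) (hd : 1 ≤ d) (r : ℝ) (h0 : 0 ≤ r) (h1 : r < 1) (x : Fin d → ℤ)
    (hx : x ≠ 0) : hh d r x = r * PP d (hh d r) x := by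
  have h2 := (PP_hh d hd r h0 h1 x).mul_left r
  rw [← h2.tsum_eq]
  unfold hh
  rw [(qx_summable d hd r h0 h1 x).tsum_eq_zero_add]
  have : qq d 0 x = 0 := by
    rw [qq_eq]; simp [posAt_zero, hx]
  rw [this]
  simp only [zero_mul, zero_add]
  refine tsum_congr fun k => ?_
  rw [qq_succ]
  simp only [hx, if_false]
  ring

/-- mass balance for functions satisfying the eigen-equation off `0` -/
lemma mass (d : ℕ) (hd : 1 ≤ d) (u S : ℝ) (f : (Fin d → ℤ) → ℝ) (hf : HasSum f S)
    (h : ∀ x, x ≠ 0 → (1 + u) * f x = PP d f x) :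
    (1 + u) * (S - f 0) = S - PP d f 0 := by
  have h1 := (hf.sub (hasSum_ite_eq (0 : Fin d → ℤ) (f 0))).mul_left (1 + u)
  have h2 := (PP_hasSum d hd f S hf).sub (hasSum_ite_eq (0 : Fin d → ℤ) (PP d f 0))
  refine h1.unique ?_
  have hfun : (fun x => (1 + u) * (f x - if x = 0 then f 0 else 0)) =
      fun x => PP d f x - if x = 0 then PP d f 0 else 0 := by
    funext x
    by_cases hx : x = 0
    · simp [hx]
    · simp [hx, h x hx]
  rw [hfun]
  exact h2

lemma zero_prop (d : ℕ) (hd : 1 ≤ d) (f : (Fin d → ℤ) → ℝ) (hf : ∀ x, 0 ≤ f x)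
    (h0 : f 0 = 0) (h : ∀ x, f x = 0 → PP d f x = 0) (x : Fin d → ℤ) : f x = 0 := by
  have hd' : (0:ℝ) < d := by exact_mod_cast hd
  have step : ∀ x, f x = 0 → ∀ i, f (x + e d i) = 0 ∧ f (x - e d i) = 0 := by
    intro x hx i
    have h1 := h x hx
    unfold PP at h1
    rcases mul_eq_zero.mp h1 with h2 | h2
    · have : (1 / (2 * (d:ℝ))) > 0 := by positivity
      linarith
    · rw [Finset.sum_eq_zero_iff_of_nonneg (fun i _ => add_nonneg (hf _) (hf _))] at h2
      have := h2 i (Finset.mem_univ i)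
      have a := hf (x + e d i)
      have b := hf (x - e d i)
      constructor <;> linarith
  have step2 : ∀ (n : ℤ) x, f x = 0 → ∀ i, f (x + n • e d i) = 0 := by
    intro n x hx i
    induction n with
    | zero => simpa using hx
    | succ n ih =>
      have := (step _ ih i).1
      rwa [add_assoc, ← add_one_zsmul] at this
    | pred n ih =>
      have := (step _ ih i).2
      rwa [add_sub_assoc, sub_eq_add_neg (_ • _), ← sub_one_zsmul] at this
  have step3 : ∀ s : Finset (Fin d), f (∑ i ∈ s, x i • e d i) = 0 := by
    intro s
    induction s using Finset.induction_on with
    | empty => simpa using h0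
    | insert i s hi ih =>
      rw [Finset.sum_insert hi, add_comm]
      exact step2 _ _ ih i
  have := step3 Finset.univ
  convert this using 2
  funext j
  simp [e, Finset.sum_apply, Pi.single_apply]

lemma gen_unique (d : ℕ) (hd : 1 ≤ d) (u : ℝ) (hu : 0 < u) (D : (Fin d → ℤ) → ℝ)
    (hD : Summable D) (h0 : D 0 = 0) (h : ∀ x, x ≠ 0 → (1 + u) * D x = PP d D x)
    (x : Fin d → ℤ) : D x = 0 := by
  have hA : Summable fun x => |D x| := hD.abs
  have h1 : ∀ x, (1 + u) * |D x| ≤ PP d (fun x => |D x|) x := by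
    intro x
    by_cases hx : x = 0
    · rw [hx, h0]
      simpa using PP_nonneg d (fun x => |D x|) (fun x => abs_nonneg _) 0
    · have : (1 + u) * |D x| = |PP d D x| := by
        rw [← h x hx, abs_mul, abs_of_pos (by linarith : (0:ℝ) < 1 + u)]
      rw [this]
      unfold PP
      rw [abs_mul, abs_of_nonneg (by positivity : (0:ℝ) ≤ 1 / (2 * (d:ℝ)))]
      refine mul_le_mul_of_nonneg_left ?_ (by positivity)
      refine (Finset.abs_sum_le_sum_abs _ _).trans (Finset.sum_le_sum fun i _ => abs_add_le _ _)
  have h2 := hasSum_le h1 (hA.hasSum.mul_left (1+u)) (PP_hasSum d hd _ _ hA.hasSum)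
  have h3 : |D x| ≤ ∑' x, |D x| := hA.le_tsum x (fun _ _ => abs_nonneg _)
  have h4 : |D x| ≤ 0 := by nlinarith
  exact abs_nonpos_iff.mp h4

/-- structure of solutions -/
lemma sol (d : ℕ) (hd : 1 ≤ d) (ε : ℝ) (hε : 0 < ε) (ν : (Fin d → ℤ) → ℝ)
    (hp : IsProbMeasure d ν) (hb : BalanceEq d ε ν) :
    0 < ν 0 ∧ (∀ x, ν x = ν 0 * hh d (1 + ε * ν 0)⁻¹ x) ∧
      1 + ε * ν 0 - AA d (1 + ε * ν 0)⁻¹ = ε := by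
  obtain ⟨hn, hs⟩ := hp
  have hm := mass d hd (ε * ν 0) 1 ν hs hb
  have hpos : 0 < ν 0 := by
    refine lt_of_le_of_ne (hn 0) fun h0 => ?_
    have hz : ∀ x, ν x = 0 := by
      refine zero_prop d hd ν hn h0.symm fun x hx => ?_
      by_cases hx0 : x = 0
      · rw [hx0]; rw [← h0] at hm; linarith
      · have := hb x hx0
        rw [hx, mul_zero] at this
        exact this.symm
    have : ν = fun _ => 0 := funext hz
    rw [this] at hs
    exact zero_ne_one (hasSum_zero.unique hs)
  have hu : 0 < ε * ν 0 := mul_pos hε hpos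
  set u := ε * ν 0 with hudef
  have hr0 : 0 ≤ (1 + u)⁻¹ := by positivity
  have hr1 : (1 + u)⁻¹ < 1 := inv_lt_one_of_one_lt₀ (by linarith)
  have lin : ∀ x, PP d (fun x => ν x - ν 0 * hh d (1+u)⁻¹ x) x =
      PP d ν x - ν 0 * PP d (hh d (1+u)⁻¹) x := by
    intro x
    unfold PP
    rw [mul_left_comm, ← mul_sub, Finset.mul_sum Finset.univ _ (ν 0), ← Finset.sum_sub_distrib]
    congr 1
    refine Finset.sum_congr rfl fun i _ => ?_
    ring
  have hD := gen_unique d hd u hu (fun x => ν x - ν 0 * hh d (1+u)⁻¹ x)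
    (hs.summable.sub ((hh_summable d hd _ hr0 hr1).mul_left _))
    (by simp [hh_zero]) (by
      intro x hx
      rw [lin, hh_eq d hd _ hr0 hr1 x hx]
      have := hb x hx
      change (1 + u) * ν x = PP d ν x at this
      rw [mul_sub, this]
      field_simp)
  refine ⟨hpos, fun x => by linarith [hD x], ?_⟩
  have e0 := lin 0
  rw [PP_hh_zero d hd _ hr0 hr1] at e0
  have e1 : PP d (fun x => ν x - ν 0 * hh d (1+u)⁻¹ x) 0 = 0 := by
    have : (fun x => ν x - ν 0 * hh d (1+u)⁻¹ x) = fun _ => 0 := funext hD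
    rw [this]; simp [PP]
  have e2 : ν 0 * (1 + u - AA d (1+u)⁻¹) = ν 0 * ε := by
    have : PP d ν 0 = ν 0 * AA d (1+u)⁻¹ := by linarith
    rw [this] at hm
    linarith
  exact mul_left_cancel₀ hpos.ne' e2

lemma G_mono (d : ℕ) (hd : 1 ≤ d) (u v : ℝ) (hu : 0 ≤ u) (huv : u < v) :
    1 + u - AA d (1+u)⁻¹ < 1 + v - AA d (1+v)⁻¹ := by
  have := AA_mono d hd (1+v)⁻¹ (1+u)⁻¹ (inv_nonneg.mpr (by linarith))
    (inv_anti₀ (by linarith) (by linarith)) (inv_le_one_of_one_le₀ (by linarith))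
  linarith

lemma G_exists (d : ℕ) (hd : 1 ≤ d) (ε : ℝ) (hε : gamma d < ε) :
    ∃ u, 0 < u ∧ 1 + u - AA d (1+u)⁻¹ = ε := by
  rw [gamma_eq] at hε
  have ht := aa_tsum_le d hd
  have hε0 : 0 < ε := by linarith
  have hmaps : Set.MapsTo (fun u : ℝ => (1+u)⁻¹) (Set.Icc 0 ε) (Set.Icc 0 1) := by
    intro u hu
    have := hu.1
    exact ⟨by positivity, inv_le_one_of_one_le₀ (by linarith)⟩
  have hc : ContinuousOn (fun u => 1 + u - AA d (1+u)⁻¹) (Set.Icc 0 ε) := by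
    refine ContinuousOn.sub (by fun_prop) ((AA_cont d hd).comp ?_ hmaps)
    refine ContinuousOn.inv₀ (by fun_prop) fun u hu => ?_
    have := hu.1
    positivity
  have h1 := AA_mono d hd (1+ε)⁻¹ 1 (by positivity)
    (inv_le_one_of_one_le₀ (by linarith)) le_rfl
  rw [AA_one] at h1
  obtain ⟨u, hu, he⟩ := intermediate_value_Icc hε0.le hc
    (show ε ∈ Set.Icc _ _ from ⟨by simp [AA_one]; linarith, by linarith⟩)
  refine ⟨u, lt_of_le_of_ne hu.1 ?_, he⟩
  rintro rfl
  simp [AA_one] at he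
  linarith

end CBRW

open CBRW in
/-- Theorem 1.3(ii): if `ε > γ_d`, there is a unique probability measure on `ℤ^d`
satisfying the balance equation with parameter `ε`. -/
theorem existsUnique_balance_probability_measure_of_gamma_lt
    (d : ℕ) (hd : 1 ≤ d) (ε : ℝ) (hεγ : gamma d < ε) :
    ∃! ν : (Fin d → ℤ) → ℝ, IsProbMeasure d ν ∧ BalanceEq d ε ν := by
  have hε : 0 < ε := by
    have := aa_tsum_le d hd
    rw [gamma_eq] at hεγ
    linarith
  obtain ⟨u, hu, he⟩ := G_exists d hd ε hεγ
  have hr0 : 0 ≤ (1 + u)⁻¹ := by positivity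
  have hr1 : (1 + u)⁻¹ < 1 := inv_lt_one_of_one_lt₀ (by linarith)
  have huε : ε * (u / ε) = u := by field_simp
  refine ⟨fun x => u / ε * hh d (1+u)⁻¹ x, ⟨⟨fun x => ?_, ?_⟩, ?_⟩, ?_⟩
  · exact mul_nonneg (by positivity) (hh_nonneg d _ hr0 x)
  · have hs := (hh_summable d hd _ hr0 hr1).hasSum
    have hm := mass d hd u _ _ hs (fun x hx => by
      rw [hh_eq d hd _ hr0 hr1 x hx]; field_simp)
    rw [hh_zero, PP_hh_zero d hd _ hr0 hr1] at hm
    have h1 := hs.mul_left (u / ε)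
    have hS : u / ε * ∑' x, hh d (1+u)⁻¹ x = 1 := by
      rw [div_mul_eq_mul_div, div_eq_one_iff_eq hε.ne']
      linarith
    rw [hS] at h1
    exact h1
  · intro x hx
    simp only [hh_zero, mul_one, huε]
    have h1 := hh_eq d hd _ hr0 hr1 x hx
    have h2 : (1 + u) * hh d (1+u)⁻¹ x = PP d (hh d (1+u)⁻¹) x := by
      rw [h1]; field_simp
    calc (1 + u) * (u / ε * hh d (1+u)⁻¹ x) = u / ε * ((1 + u) * hh d (1+u)⁻¹ x) := by ring
      _ = _ := by
        rw [h2]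
        unfold PP
        simp only [← mul_add, ← Finset.mul_sum]
        ring
  · rintro μ ⟨hp, hb⟩
    obtain ⟨hpos, hμ, hG⟩ := sol d hd ε hε μ hp hb
    have hv : 0 < ε * μ 0 := mul_pos hε hpos
    have huv : ε * μ 0 = u := by
      rcases lt_trichotomy (ε * μ 0) u with h | h | h
      · have := G_mono d hd _ _ hv.le h
        linarith
      · exact h
      · have := G_mono d hd _ _ hu.le h
        linarith
    funext x
    rw [hμ x, huv]
    congr 1
    rw [eq_div_iff hε.ne']
    linarith
end

section
/- Let d ≥ 1 and ε ≥ 0. Every probability measure ν on ℤ^d satisfying the balance equation with parameter ε has ν_0 > 0. (Indeed, if ν_0 = 0 the balance equation forces ν to be a bounded harmonic function on ℤ^d, hence constant, contradicting Σ_x ν_x = 1.) -/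
open Finset

open CBRW in
/-- Every probability measure on `ℤ^d` satisfying the balance equation with
parameter `ε ≥ 0` puts positive mass at the origin. -/
theorem balance_probability_measure_pos_at_origin
    (d : ℕ) (hd : 1 ≤ d) (ε : ℝ) (hε : 0 ≤ ε) (ν : (Fin d → ℤ) → ℝ)
    (hν : IsProbMeasure d ν) (hbal : BalanceEq d ε ν) :
    0 < ν 0 := by
  obtain ⟨hnn, hsum⟩ := hν
  rcases (hnn 0).lt_or_eq with h | h0
  · exact h
  exfalso
  have h0 : ν 0 = 0 := h0.symm
  -- some point has positive mass
  obtain ⟨p, hp⟩ : ∃ p, 0 < ν p := by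
    by_contra hcon
    push Not at hcon
    have hz : ν = fun _ => 0 := funext fun x => le_antisymm (hcon x) (hnn x)
    rw [hz] at hsum
    exact zero_ne_one (hasSum_zero.unique hsum)
  -- superlevel sets are finite
  have hfin : ∀ c : ℝ, 0 < c → {x | c ≤ ν x}.Finite := by
    intro c hc
    have ht := hsum.summable.tendsto_cofinite_zero
    have hev := ht.eventually (gt_mem_nhds hc)
    rw [Filter.eventually_cofinite] at hev
    simpa using hev
  -- the maximum is attained
  obtain ⟨q, hq, hmax⟩ := Set.exists_max_image _ ν (hfin (ν p) hp) ⟨p, le_refl (ν p)⟩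
  have hq' : ν p ≤ ν q := hq
  have hqpos : 0 < ν q := lt_of_lt_of_le hp hq'
  have hle : ∀ x, ν x ≤ ν q := by
    intro x
    by_cases hx : ν p ≤ ν x
    · exact hmax x hx
    · linarith
  have hd0 : (0 : ℝ) < d := by exact_mod_cast hd
  let i0 : Fin d := ⟨0, hd⟩
  -- the set of maximizers is stable under translation
  have hstep : ∀ x, ν x = ν q → ν (x + e d i0) = ν q := by
    intro x hx
    have hx0 : x ≠ 0 := by
      rintro rfl
      linarith
    have hb := hbal x hx0
    rw [h0, hx] at hb
    have hb2 : ∑ i : Fin d, (ν (x + e d i) + ν (x - e d i)) = ∑ _i : Fin d, (ν q + ν q) := by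
      rw [Finset.sum_const, Finset.card_univ, Fintype.card_fin, nsmul_eq_mul]
      field_simp at hb
      linarith
    have hall := (Finset.sum_eq_sum_iff_of_le
      (fun i _ => add_le_add (hle (x + e d i)) (hle (x - e d i)))).1 hb2 i0 (Finset.mem_univ _)
    linarith [hle (x + e d i0), hle (x - e d i0)]
  have hiter : ∀ n : ℕ, ν (q + n • e d i0) = ν q := by
    intro n
    induction n with
    | zero => simp
    | succ n ih =>
      rw [succ_nsmul, ← add_assoc]
      exact hstep _ ih
  have hinj : Function.Injective (fun n : ℕ => q + n • e d i0) := by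
    intro m n hmn
    have h1 := congrFun hmn i0
    simpa [e] using h1
  exact Set.infinite_of_injective_forall_mem hinj
    (fun n => (hiter n).ge) (hfin (ν q) hqpos)
end

section
/- Let d ≥ 1, ε ≥ 0, and let ν be a probability measure on ℤ^d satisfying the balance equation with parameter ε. Then ν also satisfies the balance equation at the origin: (1 − ε(1 − ν_0)) ν_0 = (1/(2d)) Σ_{i=1}^d (ν_{e_i} + ν_{−e_i}). -/
open Finset

open CBRW in
/-- Any probability measure satisfying the balance equation with parameter `ε`
also satisfies the balance equation at the origin:
`(1 - ε (1 - ν 0)) ν 0 = (1/(2d)) ∑ i (ν (e i) + ν (-e i))`. -/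
theorem balance_probability_measure_balance_at_origin
    (d : ℕ) (hd : 1 ≤ d) (ε : ℝ) (hε : 0 ≤ ε) (ν : (Fin d → ℤ) → ℝ)
    (hν : IsProbMeasure d ν) (hbal : BalanceEq d ε ν) :
    (1 - ε * (1 - ν 0)) * ν 0 =
      (1 / (2 * (d : ℝ))) * ∑ i : Fin d, (ν (e d i) + ν (-(e d i))) := by
  obtain ⟨_, hs⟩ := hν
  have hd0 : (d : ℝ) ≠ 0 := by
    have : d ≠ 0 := by omega
    exact_mod_cast this
  have hplus : ∀ i : Fin d, HasSum (fun x => ν (x + e d i)) 1 := fun i =>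
    (Equiv.addRight (e d i)).hasSum_iff.mpr hs
  have hminus : ∀ i : Fin d, HasSum (fun x => ν (x - e d i)) 1 := fun i =>
    (Equiv.subRight (e d i)).hasSum_iff.mpr hs
  have hF : HasSum (fun x => (1 / (2 * (d : ℝ))) *
      ∑ i : Fin d, (ν (x + e d i) + ν (x - e d i))) 1 := by
    have h := (hasSum_sum (s := Finset.univ)
      (fun i _ => (hplus i).add (hminus i))).mul_left (1 / (2 * (d : ℝ)))
    have hv : (1 / (2 * (d : ℝ))) * ∑ _i : Fin d, ((1 : ℝ) + 1) = 1 := by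
      rw [Finset.sum_const, Finset.card_univ, Fintype.card_fin, nsmul_eq_mul]
      field_simp
      norm_num
    rw [hv] at h
    exact h
  have hD := hF.sub (hs.mul_left (1 + ε * ν 0))
  have h0 := hasSum_single (f := fun x => (1 / (2 * (d : ℝ))) *
      ∑ i : Fin d, (ν (x + e d i) + ν (x - e d i)) - (1 + ε * ν 0) * ν x) 0
      (fun x hx => by simp only [hbal x hx, sub_self])
  have heq := hD.unique h0
  simp only [zero_add, zero_sub] at heq
  linarith
end

section
/- Let d ≥ 1 and ε > 0, and let ν : ℤ^d → [0,∞) be a bounded function satisfying the balance equation with parameter ε and with ν_0 > 0. Fix x ∈ ℤ^d with x ≠ 0 and let (S_n)_{n≥0} be the simple random walk on ℤ^d started at x, with τ_0 = inf{n ≥ 1 : S_n = 0}. Then the process M_n := ν_{S_{n∧τ_0}} · (1 + ε ν_0)^{−(n∧τ_0)}, n ≥ 0, is a bounded martingale with respect to the filtration generated by the increments (ξ_1, …, ξ_n). -/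
open Finset

namespace CBRW

/-- The position at time `n` of the simple random walk started at `x` driven by the
infinite word of increments `w`. -/
def posInf (d : ℕ) (x : Fin d → ℤ) (w : ℕ → Fin d × Bool) (n : ℕ) : Fin d → ℤ :=
  x + ∑ i ∈ Finset.range n, dir d (w i)

open Classical in
/-- `n ∧ τ_0`: the minimum of `n` and the first time `j ≥ 1` at which the walk started at
`x` and driven by `w` is at the origin. -/
noncomputable def stopIdx (d : ℕ) (x : Fin d → ℤ) (w : ℕ → Fin d × Bool) (n : ℕ) : ℕ :=
  if h : ∃ j, 1 ≤ j ∧ j ≤ n ∧ posInf d x w j = 0 then Nat.find h else n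

lemma posInf_update (d : ℕ) (x : Fin d → ℤ) (w : ℕ → Fin d × Bool) (n j : ℕ) (s : Fin d × Bool)
    (hj : j ≤ n) : posInf d x (Function.update w n s) j = posInf d x w j := by
  unfold posInf
  congr 1
  refine Finset.sum_congr rfl fun i hi => ?_
  have : i ≠ n := by
    have := Finset.mem_range.1 hi
    omega
  rw [Function.update_of_ne this]

lemma posInf_update_succ (d : ℕ) (x : Fin d → ℤ) (w : ℕ → Fin d × Bool) (n : ℕ)
    (s : Fin d × Bool) :
    posInf d x (Function.update w n s) (n + 1) = posInf d x w n + dir d s := by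
  have h := posInf_update d x w n n s le_rfl
  unfold posInf at h ⊢
  rw [Finset.sum_range_succ, ← add_assoc, h, Function.update_self]

lemma stopIdx_eq_hit (d : ℕ) (x : Fin d → ℤ) (w : ℕ → Fin d × Bool) (n j : ℕ)
    (h1 : 1 ≤ j) (h2 : j ≤ n) (h3 : posInf d x w j = 0)
    (h4 : ∀ i, 1 ≤ i → i < j → posInf d x w i ≠ 0) : stopIdx d x w n = j := by
  classical
  have h : ∃ j, 1 ≤ j ∧ j ≤ n ∧ posInf d x w j = 0 := ⟨j, h1, h2, h3⟩
  unfold stopIdx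
  rw [dif_pos h, Nat.find_eq_iff]
  exact ⟨⟨h1, h2, h3⟩, fun i hi hc => h4 i hc.1 hi hc.2.2⟩

lemma stopIdx_eq_self (d : ℕ) (x : Fin d → ℤ) (w : ℕ → Fin d × Bool) (n : ℕ)
    (h4 : ∀ i, 1 ≤ i → i < n → posInf d x w i ≠ 0) : stopIdx d x w n = n := by
  by_cases h : 1 ≤ n ∧ posInf d x w n = 0
  · exact stopIdx_eq_hit d x w n n h.1 le_rfl h.2 h4
  · unfold stopIdx
    rw [dif_neg]
    rintro ⟨j, a, b, c⟩
    rcases b.lt_or_eq with b | rfl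
    · exact h4 j a b c
    · exact h ⟨a, c⟩

end CBRW

open CBRW in
/-- The stopped process `M_n = ν(S_{n ∧ τ_0}) (1 + ε ν 0)^{-(n ∧ τ_0)}` is a bounded
martingale with respect to the filtration generated by the increments: it is uniformly
bounded, and its average over the `2d` equally likely values of the `(n+1)`-st increment,
given the first `n` increments, equals its current value. -/
theorem stopped_process_bounded_martingale
    (d : ℕ) (hd : 1 ≤ d) (ε : ℝ) (hε : 0 < ε)
    (ν : (Fin d → ℤ) → ℝ) (hν0 : ∀ x, 0 ≤ ν x) (hbdd : ∃ B, ∀ x, ν x ≤ B)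
    (hbal : BalanceEq d ε ν) (hpos : 0 < ν 0)
    (x : Fin d → ℤ) (hx : x ≠ 0)
    (M : ℕ → (ℕ → Fin d × Bool) → ℝ)
    (hM : ∀ n w, M n w =
      ν (posInf d x w (stopIdx d x w n)) * ((1 + ε * ν 0) ^ (stopIdx d x w n))⁻¹) :
    (∃ C, ∀ n w, |M n w| ≤ C) ∧
      ∀ (n : ℕ) (w : ℕ → Fin d × Bool),
        (∑ s : Fin d × Bool, M (n + 1) (Function.update w n s)) / (2 * (d : ℝ)) = M n w := by
  have hr : 1 ≤ 1 + ε * ν 0 := by nlinarith [mul_pos hε hpos]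
  have hd' : (0 : ℝ) < d := by exact_mod_cast hd
  constructor
  · obtain ⟨B, hB⟩ := hbdd
    refine ⟨B, fun n w => ?_⟩
    have hp : 1 ≤ (1 + ε * ν 0) ^ (stopIdx d x w n) := one_le_pow₀ hr
    rw [hM, abs_of_nonneg (mul_nonneg (hν0 _) (inv_nonneg.2 (by linarith)))]
    exact (mul_le_of_le_one_right (hν0 _) (inv_le_one_of_one_le₀ hp)).trans (hB _)
  · intro n w
    by_cases h : ∃ j, 1 ≤ j ∧ j ≤ n ∧ posInf d x w j = 0
    · classical
      obtain ⟨h1, h2, h3⟩ := Nat.find_spec h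
      have hmin : ∀ i, 1 ≤ i → i < Nat.find h → posInf d x w i ≠ 0 := fun i hi hlt hc =>
        Nat.find_min h hlt ⟨hi, by omega, hc⟩
      generalize Nat.find h = j at h1 h2 h3 hmin
      have hs : ∀ s, M (n + 1) (Function.update w n s) = M n w := by
        intro s
        rw [hM, hM, stopIdx_eq_hit d x w n j h1 h2 h3 hmin,
          stopIdx_eq_hit d x (Function.update w n s) (n + 1) j h1 (by omega)
            (by rw [posInf_update _ _ _ _ _ _ h2]; exact h3)
            (fun i hi hlt => by
              rw [posInf_update _ _ _ _ _ _ (by omega)]; exact hmin i hi hlt),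
          posInf_update _ _ _ _ _ _ h2]
      simp only [hs, Finset.sum_const, Finset.card_univ, Fintype.card_prod, Fintype.card_fin,
        Fintype.card_bool, nsmul_eq_mul]
      push_cast
      field_simp
    · have hno : ∀ i, 1 ≤ i → i ≤ n → posInf d x w i ≠ 0 := fun i a b c => h ⟨i, a, b, c⟩
      have hne : posInf d x w n ≠ 0 := by
        rcases Nat.eq_zero_or_pos n with rfl | hn
        · simpa [posInf] using hx
        · exact hno n hn le_rfl
      have hs : ∀ s, M (n + 1) (Function.update w n s) =
          ν (posInf d x w n + dir d s) * ((1 + ε * ν 0) ^ (n + 1))⁻¹ := by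
        intro s
        rw [hM, stopIdx_eq_self d x (Function.update w n s) (n + 1)
            (fun i hi hlt => by
              rw [posInf_update _ _ _ _ _ _ (by omega)]; exact hno i hi (by omega)),
          posInf_update_succ]
      have hb := hbal _ hne
      rw [hM n w, stopIdx_eq_self d x w n (fun i hi hlt => hno i hi hlt.le)]
      simp only [hs]
      rw [← Finset.sum_mul, Fintype.sum_prod_type]
      simp only [Fintype.sum_bool, dir, if_true, Bool.false_eq_true, if_false, ← sub_eq_add_neg]
      have hr0 : 1 + ε * ν 0 ≠ 0 := by linarith
      generalize (∑ i : Fin d, (ν (posInf d x w n + e d i) + ν (posInf d x w n - e d i))) = T at *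
      generalize 1 + ε * ν 0 = r at *
      have hT : T = 2 * d * (r * ν (posInf d x w n)) := by
        rw [hb]; field_simp
      rw [hT, pow_succ]
      field_simp
end

section
/- Uniqueness for the lattice heat equation with a potential at the origin: let d ≥ 1 and ε ≥ 0. Suppose v_1, v_2 : ℤ^d × [0,∞) → ℝ are such that (i) for each x ∈ ℤ^d and each i ∈ {1,2}, the map t ↦ v_i(x,t) is differentiable on [0,∞) and satisfies ∂_t v_i(x,t) = Δ v_i(x,t) + ε · 1{x=0} · v_i(x,t) for all t ≥ 0; (ii) v_1(x,0) = v_2(x,0) for all x ∈ ℤ^d; (iii) for every T > 0, Σ_{x∈ℤ^d} sup_{0≤t≤T} (v_1(x,t) − v_2(x,t))² < ∞. Then v_1(x,t) = v_2(x,t) for all x ∈ ℤ^d and t ≥ 0. -/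
open Finset

namespace CBRW

/-- The discrete Laplacian on `ℤ^d`:
`Δf(x) = (1/(2d)) ∑ i (f (x + e i) + f (x - e i) - 2 f x)`. -/
noncomputable def lap (d : ℕ) (f : (Fin d → ℤ) → ℝ) (x : Fin d → ℤ) : ℝ :=
  (1 / (2 * (d : ℝ))) * ∑ i : Fin d, (f (x + e d i) + f (x - e d i) - 2 * f x)

end CBRW

open CBRW in
theorem lap_abs_le (d : ℕ) (hd : 1 ≤ d) (f : (Fin d → ℤ) → ℝ) (K : ℝ)
    (hf : ∀ x, |f x| ≤ K) (x : Fin d → ℤ) : |lap d f x| ≤ 2 * K := by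
  have hd' : (0 : ℝ) < d := by exact_mod_cast hd
  unfold lap
  rw [abs_mul, abs_of_pos (by positivity : (0 : ℝ) < 1 / (2 * (d : ℝ)))]
  have h1 : |∑ i : Fin d, (f (x + e d i) + f (x - e d i) - 2 * f x)| ≤ d * (4 * K) := by
    refine (Finset.abs_sum_le_sum_abs _ _).trans ?_
    have : ∑ i : Fin d, |f (x + e d i) + f (x - e d i) - 2 * f x| ≤ ∑ i : Fin d, 4 * K := by
      refine Finset.sum_le_sum fun i _ => ?_
      have a1 := abs_le.1 (hf (x + e d i))
      have a2 := abs_le.1 (hf (x - e d i))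
      have a3 := abs_le.1 (hf x)
      rw [abs_le]
      constructor <;> linarith [a1.1, a1.2, a2.1, a2.2, a3.1, a3.2]
    simpa using this
  calc _ ≤ 1 / (2 * (d : ℝ)) * (d * (4 * K)) := by gcongr
    _ = 2 * K := by field_simp; ring

open CBRW in
/-- Uniqueness for the lattice heat equation with a potential `ε 𝟙_{x=0}` at the origin:
two solutions with the same initial condition and square-summable difference
(uniformly on compact time intervals) coincide. -/
theorem lattice_heat_equation_uniqueness
    (d : ℕ) (hd : 1 ≤ d) (ε : ℝ) (hε : 0 ≤ ε)
    (v₁ v₂ : (Fin d → ℤ) → ℝ → ℝ)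
    (hv₁ : ∀ (x : Fin d → ℤ) (t : ℝ), 0 ≤ t →
      HasDerivWithinAt (v₁ x)
        (lap d (fun y => v₁ y t) x + ε * (if x = 0 then 1 else 0) * v₁ x t)
        (Set.Ici 0) t)
    (hv₂ : ∀ (x : Fin d → ℤ) (t : ℝ), 0 ≤ t →
      HasDerivWithinAt (v₂ x)
        (lap d (fun y => v₂ y t) x + ε * (if x = 0 then 1 else 0) * v₂ x t)
        (Set.Ici 0) t)
    (h0 : ∀ x : Fin d → ℤ, v₁ x 0 = v₂ x 0)
    (hsum : ∀ T : ℝ, 0 < T →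
      Summable fun x : Fin d → ℤ => ⨆ t ∈ Set.Icc (0 : ℝ) T, (v₁ x t - v₂ x t) ^ 2) :
    ∀ (x : Fin d → ℤ) (t : ℝ), 0 ≤ t → v₁ x t = v₂ x t := by
  intro x₀ t₀ ht₀
  obtain ⟨T, hT, htT⟩ : ∃ T : ℝ, 0 < T ∧ t₀ ≤ T := ⟨t₀ + 1, by linarith, by linarith⟩
  set w : (Fin d → ℤ) → ℝ → ℝ := fun x t => v₁ x t - v₂ x t with hw
  have hder : ∀ x t, 0 ≤ t → HasDerivWithinAt (w x)
      (lap d (fun y => w y t) x + ε * (if x = 0 then 1 else 0) * w x t) (Set.Ici 0) t := by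
    intro x t ht
    refine ((hv₁ x t ht).sub (hv₂ x t ht)).congr_deriv ?_
    have : lap d (fun y => w y t) x = lap d (fun y => v₁ y t) x - lap d (fun y => v₂ y t) x := by
      simp only [lap, hw]
      rw [← mul_sub, ← Finset.sum_sub_distrib]
      congr 1
      exact Finset.sum_congr rfl fun i _ => by ring
    rw [this]
    simp only [hw]
    ring
  have hcont : ∀ x, ContinuousOn (w x) (Set.Icc 0 T) := fun x t ht =>
    ((hder x t ht.1).continuousWithinAt).mono Set.Icc_subset_Ici_self
  set M : (Fin d → ℤ) → ℝ := fun x => ⨆ t ∈ Set.Icc (0 : ℝ) T, (w x t) ^ 2 with hM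
  have hMs : Summable M := hsum T hT
  have hM0 : ∀ x, 0 ≤ M x := fun x =>
    Real.iSup_nonneg fun t => Real.iSup_nonneg fun _ => sq_nonneg _
  have hwM : ∀ x, ∀ t ∈ Set.Icc (0 : ℝ) T, (w x t) ^ 2 ≤ M x := by
    intro x t ht
    obtain ⟨C, hC⟩ := (isCompact_Icc.image_of_continuousOn ((hcont x).pow 2)).bddAbove
    have hb : BddAbove (Set.range fun s => ⨆ _ : s ∈ Set.Icc (0 : ℝ) T, (w x s) ^ 2) := by
      refine ⟨max C 0, ?_⟩
      rintro _ ⟨s, rfl⟩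
      refine Real.iSup_le (fun hs => ?_) (le_max_right _ _)
      exact le_max_of_le_left (hC ⟨s, hs, rfl⟩)
    have h1 := le_ciSup hb t
    simp only [ht, ciSup_unique] at h1
    exact h1
  set A : ℝ := Real.sqrt (∑' x, M x) with hA
  have hA0 : 0 ≤ A := Real.sqrt_nonneg _
  have hwA : ∀ x, ∀ t ∈ Set.Icc (0 : ℝ) T, |w x t| ≤ A := fun x t ht =>
    Real.abs_le_sqrt ((hwM x t ht).trans (hMs.le_tsum x fun y _ => hM0 y))
  set C : ℝ := 2 + ε with hC
  have key : ∀ n : ℕ, ∀ x, ∀ t ∈ Set.Icc (0 : ℝ) T,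
      |w x t| ≤ A * ((C * t) ^ n / (n.factorial : ℝ)) := by
    intro n
    induction n with
    | zero => intro x t ht; simpa using hwA x t ht
    | succ n ih =>
      intro x t ht
      have hB : ∀ s : ℝ, HasDerivAt
          (fun s : ℝ => A * ((C * s) ^ (n + 1) / ((n + 1).factorial : ℝ)))
          (C * (A * ((C * s) ^ n / (n.factorial : ℝ)))) s := by
        intro s
        have h1 := (((((hasDerivAt_id s).const_mul C).pow (n + 1)).div_const
          ((n + 1).factorial : ℝ)).const_mul A)
        refine h1.congr_deriv ?_
        have : (n.factorial : ℝ) ≠ 0 := by positivity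
        have h2 : (n : ℝ) + 1 ≠ 0 := by positivity
        simp only [Nat.factorial_succ, id, Nat.add_sub_cancel]
        push_cast
        field_simp
      have := image_norm_le_of_norm_deriv_right_le_deriv_boundary (a := 0) (b := T) (hcont x)
        (fun s hs => (hder x s hs.1).mono (Set.Ici_subset_Ici.2 hs.1))
        (B := fun s : ℝ => A * ((C * s) ^ (n + 1) / ((n + 1).factorial : ℝ)))
        (by simp [hw, h0]) hB (fun s hs => ?_) ht
      · simpa using this
      · have hs' : s ∈ Set.Icc (0 : ℝ) T := ⟨hs.1, hs.2.le⟩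
        set K := A * ((C * s) ^ n / (n.factorial : ℝ)) with hK
        have l1 := lap_abs_le d hd (fun y => w y s) K (fun y => ih y s hs') x
        have l2 : |ε * (if x = 0 then 1 else 0) * w x s| ≤ ε * K := by
          have hK0 : |w x s| ≤ K := ih x s hs'
          have hK1 : 0 ≤ K := (abs_nonneg _).trans hK0
          split_ifs
          · rw [mul_one, abs_mul, abs_of_nonneg hε]
            gcongr
          · simp only [mul_zero, zero_mul, abs_zero]
            positivity
        rw [Real.norm_eq_abs]
        refine (abs_add_le _ _).trans ?_
        rw [hC]
        linarith
  have hlim : Filter.Tendsto (fun n : ℕ => A * ((C * t₀) ^ n / (n.factorial : ℝ)))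
      Filter.atTop (nhds 0) := by
    simpa using (FloorSemiring.tendsto_pow_div_factorial_atTop (C * t₀)).const_mul A
  have h3 : |w x₀ t₀| ≤ 0 :=
    ge_of_tendsto' hlim fun n => key n x₀ t₀ ⟨ht₀, htT⟩
  exact sub_eq_zero.1 (abs_nonpos_iff.1 h3)
end
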